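/- For the output sequence Π = (Π₁,…,Πₙ) of the algorithm Universal(𝓘): for every swap item Π_k with 1 < k ≤ n and every index j with 1 ≤ j < k, l(Π_j) ≥ l(Π_k), i.e., no item preceding a swap item in the output has smaller size. -/

import Mathlib

/-!
A swap item enters the sequence at the front, and insertions never change the relative order of
the items already present. So whatever precedes a swap item in the output was processed after it
and, as items come in non-decreasing size, is at least as large. Formally, the relation "if `b` is
a swap item then `l b ≤ l a`" holds for every pair `a` before `b` throughout the fold: a new item
is at least as large as everything present, which covers the pairs it starts, and it ends a pair
only when it is not a swap item, in which case the relation is vacuous.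
-/

/-- The packing of a list of items (a universal policy) for capacity `C`:
scan the list in order, starting from the empty packing, and add an item
whenever its size fits into the remaining capacity. -/
def pack {α R : Type*} [LinearOrder R] [Sub R] (size : α → R) : R → List α → List α
  | _, [] => []
  | C, x :: xs => if size x ≤ C then x :: pack size (C - size x) xs else pack size C xs

/-- The maximal prefix of a list of items fitting into capacity `C`. -/
def prefixPack {α R : Type*} [LinearOrder R] [Sub R] (size : α → R) : R → List α → List α
  | _, [] => []
  | C, x :: xs => if size x ≤ C then x :: prefixPack size (C - size x) xs else []

/-- The tie-broken density order: `DSucc v l t i j` means `d̃(i) ≻ d̃(j)`,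
i.e. `v i / l i > v j / l j`, or the densities are equal and `t i > t j`. -/
def DSucc {n : ℕ} (v l : Fin n → ℚ) (t : Fin n → Fin n) (i j : Fin n) : Prop :=
  v j / l j < v i / l i ∨ (v i / l i = v j / l j ∧ t j < t i)

instance {n : ℕ} (v l : Fin n → ℚ) (t : Fin n → Fin n) (i j : Fin n) :
    Decidable (DSucc v l t i j) := by unfold DSucc; exact inferInstance

/-- `D` is the list of all items of size at most `C`, sorted strictly
decreasingly with respect to the tie-broken density order `d̃`. -/
def IsDensityList {n : ℕ} (v l : Fin n → ℚ) (t : Fin n → Fin n) (C : ℚ)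
    (D : List (Fin n)) : Prop :=
  D.Nodup ∧ (∀ i, i ∈ D ↔ l i ≤ C) ∧ D.Pairwise (DSucc v l t)

/-- `i` is a swap item for capacity `C`: on the density-sorted list `D` of all
items of size at most `C`, the modified greedy algorithm finds `i` as the first
item after its maximal fitting prefix `P`, and `v i > v(P)`, so `MGreedy`
returns `{i}`. -/
def SwapFor {n : ℕ} (v l : Fin n → ℚ) (t : Fin n → Fin n) (i : Fin n) (C : ℚ) : Prop :=
  ∃ D : List (Fin n), IsDensityList v l t C D ∧
    D[(prefixPack l C D).length]? = some i ∧
    ((prefixPack l C D).map v).sum < v i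

/-- `i` is a swap item if it is a swap item for some capacity. -/
def IsSwapItem {n : ℕ} (v l : Fin n → ℚ) (t : Fin n → Fin n) (i : Fin n) : Prop :=
  ∃ C : ℚ, SwapFor v l t i C

/-- Insert `x` into a list immediately after the maximal prefix of elements
satisfying `p`. -/
def insertAfter {α : Type*} (p : α → Prop) [DecidablePred p] (x : α) : List α → List α
  | [] => [x]
  | y :: ys => if p y then y :: insertAfter p x ys else x :: y :: ys

open Classical in
/-- The algorithm `Universal`: process the items in the order given by `L`
(non-decreasing sizes), starting from the empty sequence; a swap item is
inserted at the front of the current sequence, any other item `x` is inserted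
immediately after the maximal prefix of items `y` with `d̃(y) ≻ d̃(x)`. -/
noncomputable def universalAlg {n : ℕ} (v l : Fin n → ℚ) (t : Fin n → Fin n)
    (L : List (Fin n)) : List (Fin n) :=
  L.foldl (fun acc x =>
    if IsSwapItem v l t x then x :: acc
    else insertAfter (fun y => DSucc v l t y x) x acc) []

theorem insertAfter_perm {α : Type*} (p : α → Prop) [DecidablePred p] (x : α) (ys : List α) :
    (insertAfter p x ys).Perm (x :: ys) := by
  induction ys with
  | nil => exact List.Perm.refl _
  | cons y ys ih =>
    rw [insertAfter]
    split_ifs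
    · exact (ih.cons y).trans (List.Perm.swap x y ys)
    · exact List.Perm.refl _

theorem insertAfter_pairwise {α : Type*} (p : α → Prop) [DecidablePred p] {R : α → α → Prop}
    {x : α} {ys : List α} (hys : ys.Pairwise R) (hx : ∀ y ∈ ys, R x y) (hx' : ∀ y ∈ ys, R y x) :
    (insertAfter p x ys).Pairwise R := by
  induction ys with
  | nil => simp [insertAfter]
  | cons y ys ih =>
    rw [insertAfter]
    split_ifs
    · rw [List.pairwise_cons] at hys ⊢
      refine ⟨fun z hz => ?_, ih hys.2 (fun z hz => hx z (List.mem_cons_of_mem _ hz))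
        (fun z hz => hx' z (List.mem_cons_of_mem _ hz))⟩
      rcases List.mem_cons.1 ((insertAfter_perm p x ys).mem_iff.1 hz) with rfl | hz
      · exact hx' y List.mem_cons_self
      · exact hys.1 z hz
    · exact List.pairwise_cons.2 ⟨hx, hys⟩

open Classical in
/-- The invariant of `universalAlg`, for a run on the items `L` from an intermediate
sequence `acc` none of whose items is larger than an item of `L`. -/
theorem universalAlg_invariant {n : ℕ} (v l : Fin n → ℚ) (t : Fin n → Fin n)
    (L acc : List (Fin n)) (hL : L.Pairwise fun a b => l a ≤ l b)
    (hle : ∀ a ∈ acc, ∀ b ∈ L, l a ≤ l b)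
    (hacc : acc.Pairwise fun a b => IsSwapItem v l t b → l b ≤ l a) :
    (L.foldl (fun acc x =>
      if IsSwapItem v l t x then x :: acc
      else insertAfter (fun y => DSucc v l t y x) x acc) acc).Pairwise
        fun a b => IsSwapItem v l t b → l b ≤ l a := by
  induction L generalizing acc with
  | nil => exact hacc
  | cons x L ih =>
    rw [List.pairwise_cons] at hL
    have hx : ∀ y ∈ acc, IsSwapItem v l t y → l y ≤ l x :=
      fun y hy _ => hle y hy x List.mem_cons_self
    have hle' : ∀ a ∈ x :: acc, ∀ b ∈ L, l a ≤ l b := by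
      intro a ha b hb
      rcases List.mem_cons.1 ha with rfl | ha
      · exact hL.1 b hb
      · exact hle a ha b (List.mem_cons_of_mem _ hb)
    rw [List.foldl_cons]
    split_ifs with hs
    · exact ih _ hL.2 hle' (List.pairwise_cons.2 ⟨hx, hacc⟩)
    · refine ih _ hL.2 (fun a ha => hle' a ((insertAfter_perm _ x acc).mem_iff.1 ha)) ?_
      exact insertAfter_pairwise _ hacc hx fun y _ h => absurd h hs

/-- In the output sequence `P` of `Universal(𝓘)`, no item
preceding a swap item has smaller size: if `P k` is a swap item and `j < k`,
then `l(P j) ≥ l(P k)`. -/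
theorem universal_sizes {n : ℕ} (v l : Fin n → ℚ)
    (hv : ∀ i, 0 ≤ v i) (hl : ∀ i, 0 < l i)
    (t : Fin n → Fin n) (ht : Function.Bijective t)
    (L : List (Fin n)) (hLnd : L.Nodup) (hLall : ∀ i, i ∈ L)
    (hLsorted : L.Pairwise fun a b => l a ≤ l b)
    (P : List (Fin n)) (hP : P = universalAlg v l t L)
    (k : ℕ) (hk : k < P.length) (hswap : IsSwapItem v l t (P[k]'hk))
    (j : ℕ) (hj : j < k) :
    l (P[k]'hk) ≤ l (P[j]'(by omega)) := by
  subst hP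
  exact List.pairwise_iff_getElem.1
    (universalAlg_invariant v l t L [] hLsorted (by simp) List.Pairwise.nil)
    j k (hj.trans hk) hk hj hswap
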